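/- Let I and J be finite disjoint index sets and, for each k ∈ I ∪ J, let ψ_k and χ_k be Kh-free formulas. Set φ = (⋀_{i∈I} Kh(ψ_i, χ_i)) ∧ (⋀_{j∈J} ¬Kh(ψ_j, χ_j)) and θ = (⋀_{i∈I} (A(¬ψ_i) ∨ Eχ_i)) ∧ (⋀_{j∈J} E(ψ_j ∧ ¬χ_j)) ∧ (⋁_{D ⊆ I×I} θ_D), where for each D ⊆ I×I, writing D̄ = (I×I) ∖ D and C(D̄) for the reflexive-transitive closure of D̄ as a relation on I, θ_D = (⋀_{j∈J} ⋀_{(s,t)∈C(D̄)} (E(ψ_j ∧ ¬ψ_s) ∨ E(χ_t ∧ ¬χ_j))) ∧ (⋀_{(t,s)∈D} E(χ_t ∧ ¬ψ_s)). Then φ is satisfiable (in some LTS) if and only if θ is satisfiable (in some LTS). -/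

import Mathlib

/-!
Only the sets `⟦ψ_k⟧`, `⟦χ_k⟧` matter, and since `ψ_k`, `χ_k` are Kh-free these depend on the
valuation alone (`truth_congr`).

From a model of `φ`, take `D` to be the set of pairs `(t, s)` with `⟦χ_t⟧ ⊄ ⟦ψ_s⟧`. Along a path of
`D̄` from `s` to `t` the witnessing plans can be concatenated (`IsWitness.trans`), so
`Kh(ψ_s, χ_t)` holds for every `(s, t) ∈ C(D̄)` (`isWitness_of_chain`). If `⟦ψ_j⟧ ⊆ ⟦ψ_s⟧` and
`⟦χ_t⟧ ⊆ ⟦χ_j⟧` both held, then `Kh(ψ_j, χ_j)` would follow, contradicting `φ`.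

From a model of `θ`, keep the states and the valuation, give every `i ∈ I` its own action `a_i` with
`R_{a_i} = ⟦ψ_i⟧ × ⟦χ_i⟧`, and leave all other relations empty (`prodLTS`). The action `a_i`
witnesses `Kh(ψ_i, χ_i)`, because `⟦χ_i⟧` is nonempty whenever `⟦ψ_i⟧` is. A plan witnessing
`Kh(ψ_j, χ_j)` cannot be empty, since `⟦ψ_j⟧ ⊄ ⟦χ_j⟧`; hence it has the form `a_{i_1} … a_{i_n}` with
`⟦ψ_j⟧ ⊆ ⟦ψ_{i_1}⟧`, `⟦χ_{i_m}⟧ ⊆ ⟦ψ_{i_{m+1}}⟧` and `⟦χ_{i_n}⟧ ⊆ ⟦χ_j⟧` (`exists_chain`). As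
`⟦χ_t⟧ ⊄ ⟦ψ_s⟧` for all `(t, s) ∈ D`, these inclusions form a path of `D̄`, so
`(i_1, i_n) ∈ C(D̄)`, and `θ_D` refutes one of the two outer inclusions.
-/

/-- Formulas of the logic L(Kh): p | ¬φ | φ∨ψ | Kh(φ,ψ). -/
inductive KhForm (P : Type) : Type
  | prop : P → KhForm P
  | neg : KhForm P → KhForm P
  | or : KhForm P → KhForm P → KhForm P
  | kh : KhForm P → KhForm P → KhForm P
  deriving DecidableEq

namespace KhForm

/-- Conjunction, as the usual abbreviation. -/
def and {P : Type} (φ ψ : KhForm P) : KhForm P := .neg (.or (.neg φ) (.neg ψ))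

/-- ⊥ abbreviates p ∧ ¬p for a fixed propositional symbol p. -/
def bot {P : Type} (p : P) : KhForm P := and (.prop p) (.neg (.prop p))

/-- ⊤ abbreviates ¬⊥. -/
def top {P : Type} (p : P) : KhForm P := .neg (bot p)

/-- Number of symbols of a formula. -/
def size {P : Type} : KhForm P → ℕ
  | .prop _ => 1
  | .neg φ => size φ + 1
  | .or φ ψ => size φ + size ψ + 1
  | .kh φ ψ => size φ + size ψ + 1

end KhForm

/-- A formula is Kh-free if it contains no occurrence of Kh. -/
def KhFree {P : Type} : KhForm P → Prop
  | .prop _ => True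
  | .neg φ => KhFree φ
  | .or φ ψ => KhFree φ ∧ KhFree ψ
  | .kh _ _ => False

/-- A labelled transition system over propositional symbols `P`, action symbols `A`
and states `S`: a family of binary relations on `S` and a valuation. -/
structure LTS (P A S : Type) where
  R : A → S → S → Prop
  V : P → Set S

/-- The relation `R_π` associated to a plan (finite word over `A`):
`R_ε` is the identity and `R_{πa} = R_π ; R_a`. -/
def runPlan {P A S : Type} (M : LTS P A S) : List A → S → S → Prop
  | [] => fun s t => s = t
  | a :: π => fun s t => ∃ u, M.R a s u ∧ runPlan M π u t

/-- `R_π(X)`, the image of a set of states under a plan. -/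
def planImage {P A S : Type} (M : LTS P A S) (π : List A) (X : Set S) : Set S :=
  { t | ∃ s ∈ X, runPlan M π s t }

/-- Strong executability of a plan at a state: at every step of the plan, the
next action is guaranteed to be performable. -/
def SE {P A S : Type} (M : LTS P A S) : List A → S → Prop
  | [] => fun _ => True
  | a :: π => fun s => (∃ u, M.R a s u) ∧ ∀ u, M.R a s u → SE M π u

/-- Truth sets: `⟦Kh(φ,ψ)⟧ = S` if there is a plan π with `⟦φ⟧ ⊆ SE(π)` and
`R_π(⟦φ⟧) ⊆ ⟦ψ⟧`, and `∅` otherwise. -/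
def truth {P A S : Type} (M : LTS P A S) : KhForm P → Set S
  | .prop p => M.V p
  | .neg φ => (truth M φ)ᶜ
  | .or φ ψ => truth M φ ∪ truth M ψ
  | .kh φ ψ => { _s | ∃ π : List A,
      (∀ s ∈ truth M φ, SE M π s) ∧ planImage M π (truth M φ) ⊆ truth M ψ }

/-- π is a witness for Kh(φ,ψ) in M. -/
def IsWitness {P A S : Type} (M : LTS P A S) (π : List A) (φ ψ : KhForm P) : Prop :=
  (∀ s ∈ truth M φ, SE M π s) ∧ planImage M π (truth M φ) ⊆ truth M ψ

/-- The universal modality `Aφ`, as the abbreviation `Kh(¬φ,⊥)`. -/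
def Aform {P : Type} (p : P) (φ : KhForm P) : KhForm P := .kh (.neg φ) (KhForm.bot p)

/-- The existential modality `Eφ = ¬A¬φ`. -/
def Eform {P : Type} (p : P) (φ : KhForm P) : KhForm P := .neg (Aform p (.neg φ))

/-- Subjective formulas: Boolean combinations (¬, ∨) of positive atoms
Kh(ψ,χ) with ψ, χ Kh-free. -/
inductive Subjective {P : Type} : KhForm P → Prop
  | atom {ψ χ : KhForm P} : KhFree ψ → KhFree χ → Subjective (.kh ψ χ)
  | neg {φ : KhForm P} : Subjective φ → Subjective (.neg φ)
  | or {φ ψ : KhForm P} : Subjective φ → Subjective ψ → Subjective (.or φ ψ)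

/-- Formulas of the logic L(A): p | ¬α | α∨β | Aα. -/
inductive AForm (P : Type) : Type
  | prop : P → AForm P
  | neg : AForm P → AForm P
  | or : AForm P → AForm P → AForm P
  | all : AForm P → AForm P

/-- Truth sets for L(A) formulas over an LTS. -/
def atruth {P A S : Type} (M : LTS P A S) : AForm P → Set S
  | .prop p => M.V p
  | .neg α => (atruth M α)ᶜ
  | .or α β => atruth M α ∪ atruth M β
  | .all α => { _s | atruth M α = Set.univ }

/-- `CBar I D s t`: the pair (s,t) is in the reflexive-transitive closure (on I)
of `D̄ = (I×I) ∖ D`. -/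
def CBar {ι : Type} (I : Finset ι) (D : Finset (ι × ι)) (s t : ι) : Prop :=
  s ∈ I ∧ t ∈ I ∧ Relation.ReflTransGen (fun u v => u ∈ I ∧ v ∈ I ∧ (u, v) ∉ D) s t

/-- `ρ` occurs (as a subformula) in a formula. -/
inductive IsSubformula {P : Type} (ρ : KhForm P) : KhForm P → Prop
  | refl : IsSubformula ρ ρ
  | neg {φ : KhForm P} : IsSubformula ρ φ → IsSubformula ρ (.neg φ)
  | orL {φ ψ : KhForm P} : IsSubformula ρ φ → IsSubformula ρ (.or φ ψ)
  | orR {φ ψ : KhForm P} : IsSubformula ρ ψ → IsSubformula ρ (.or φ ψ)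
  | khL {φ ψ : KhForm P} : IsSubformula ρ φ → IsSubformula ρ (.kh φ ψ)
  | khR {φ ψ : KhForm P} : IsSubformula ρ ψ → IsSubformula ρ (.kh φ ψ)

/-- Replace all occurrences of the atom Kh(ψ,χ) by ρ. -/
def substKh {P : Type} [DecidableEq P] (ψ χ ρ : KhForm P) : KhForm P → KhForm P
  | .prop q => .prop q
  | .neg φ => .neg (substKh ψ χ ρ φ)
  | .or φ₁ φ₂ => .or (substKh ψ χ ρ φ₁) (substKh ψ χ ρ φ₂)
  | .kh φ₁ φ₂ =>
      if φ₁ = ψ ∧ φ₂ = χ then ρ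
      else .kh (substKh ψ χ ρ φ₁) (substKh ψ χ ρ φ₂)

section

variable {P A S : Type}

theorem mem_truth_and (M : LTS P A S) (φ ψ : KhForm P) (s : S) :
    s ∈ truth M (KhForm.and φ ψ) ↔ s ∈ truth M φ ∧ s ∈ truth M ψ := by
  simp [KhForm.and, truth]

theorem not_mem_truth_bot (M : LTS P A S) (p : P) (s : S) : s ∉ truth M (KhForm.bot p) := by
  simp [KhForm.bot, mem_truth_and, truth]

/-- A strongly executable plan can be run to its end. -/
theorem SE.exists_run (M : LTS P A S) :
    ∀ (π : List A) (s : S), SE M π s → ∃ t, runPlan M π s t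
  | [], s, _ => ⟨s, rfl⟩
  | _ :: π, _, ⟨⟨u, hu⟩, h⟩ =>
    let ⟨t, ht⟩ := SE.exists_run M π u (h u hu)
    ⟨t, u, hu, ht⟩

theorem mem_truth_kh (M : LTS P A S) (φ ψ : KhForm P) (s : S) :
    s ∈ truth M (.kh φ ψ) ↔ ∃ π, IsWitness M π φ ψ := Iff.rfl

theorem mem_truth_Aform (M : LTS P A S) (p : P) (φ : KhForm P) (s : S) :
    s ∈ truth M (Aform p φ) ↔ ∀ t, t ∈ truth M φ := by
  constructor
  · rintro ⟨π, h1, h2⟩ t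
    by_contra ht
    obtain ⟨u, hu⟩ := SE.exists_run M π t (h1 t ht)
    exact not_mem_truth_bot M p u (h2 ⟨t, ht, hu⟩)
  · intro h
    exact ⟨[], fun _ hs => (hs (h _)).elim, fun _ ⟨_, hu, _⟩ => (hu (h _)).elim⟩

theorem mem_truth_Eform (M : LTS P A S) (p : P) (φ : KhForm P) (s : S) :
    s ∈ truth M (Eform p φ) ↔ ∃ t, t ∈ truth M φ := by
  change ¬ s ∈ truth M (Aform p (.neg φ)) ↔ _
  rw [mem_truth_Aform]
  simp [truth]

theorem mem_truth_or (M : LTS P A S) (φ ψ : KhForm P) (s : S) :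
    s ∈ truth M (.or φ ψ) ↔ s ∈ truth M φ ∨ s ∈ truth M ψ := Iff.rfl

theorem mem_truth_neg (M : LTS P A S) (φ : KhForm P) (s : S) :
    s ∈ truth M (.neg φ) ↔ s ∉ truth M φ := Iff.rfl

/-- The truth set of a Kh-free formula depends on the valuation only. -/
theorem truth_congr (M N : LTS P A S) (hV : M.V = N.V) :
    ∀ φ : KhForm P, KhFree φ → truth M φ = truth N φ
  | .prop q, _ => by simp [truth, hV]
  | .neg φ, h => by simp only [truth]; rw [truth_congr M N hV φ h]
  | .or φ ψ, h => by
    simp only [truth]; rw [truth_congr M N hV φ h.1, truth_congr M N hV ψ h.2]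
  | .kh _ _, h => h.elim

theorem runPlan_append (M : LTS P A S) (π ρ : List A) (s t : S) :
    runPlan M (π ++ ρ) s t ↔ ∃ u, runPlan M π s u ∧ runPlan M ρ u t := by
  induction π generalizing s with
  | nil => simp [runPlan]
  | cons a π ih => simp only [List.cons_append, runPlan, ih]; grind

theorem SE_append (M : LTS P A S) (π ρ : List A) (s : S) (h : SE M π s)
    (h' : ∀ u, runPlan M π s u → SE M ρ u) : SE M (π ++ ρ) s := by
  induction π generalizing s with
  | nil => exact h' s rfl
  | cons a π ih =>
    exact ⟨h.1, fun u hu => ih u (h.2 u hu) fun v hv => h' v ⟨u, hu, hv⟩⟩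

theorem IsWitness.trans {M : LTS P A S} {π ρ : List A} {φ φ' ψ' ψ : KhForm P}
    (h : IsWitness M π φ φ') (hsub : truth M φ' ⊆ truth M ψ') (h' : IsWitness M ρ ψ' ψ) :
    IsWitness M (π ++ ρ) φ ψ := by
  refine ⟨fun s hs => SE_append M π ρ s (h.1 s hs) fun u hu => h'.1 u (hsub (h.2 ⟨s, hs, hu⟩)), ?_⟩
  rintro t ⟨s, hs, hr⟩
  obtain ⟨u, hu, hut⟩ := (runPlan_append M π ρ s t).1 hr
  exact h'.2 ⟨u, hsub (h.2 ⟨s, hs, hu⟩), hut⟩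

/-- Concatenating witnesses along a path of `D̄` gives a witness for its endpoints. -/
theorem isWitness_of_chain {ι : Type} (M : LTS P A S) (I : Finset ι) (D : Finset (ι × ι))
    (ψ χ : ι → KhForm P) (hw : ∀ i ∈ I, ∃ π, IsWitness M π (ψ i) (χ i))
    (hD : ∀ u ∈ I, ∀ v ∈ I, (u, v) ∉ D → truth M (χ u) ⊆ truth M (ψ v))
    {s t : ι} (h : CBar I D s t) : ∃ π, IsWitness M π (ψ s) (χ t) := by
  obtain ⟨hs, -, hst⟩ := h
  induction hst with
  | refl => exact hw s hs
  | tail _ hbc ih =>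
    obtain ⟨π, hπ⟩ := ih
    obtain ⟨ρ, hρ⟩ := hw _ hbc.2.1
    exact ⟨π ++ ρ, hπ.trans (hD _ hbc.1 _ hbc.2.1 hbc.2.2) hρ⟩

/-- The LTS with valuation `V` in which the action `f i`, for `i ∈ I`, leads from every state of
`X i` to every state of `Y i`, and actions outside the range of `f` have empty relations. -/
def prodLTS {ι : Type} (V : P → Set S) (I : Finset ι) (f : I → A) (X Y : ι → Set S) :
    LTS P A S where
  R a x y := ∃ i : I, f i = a ∧ x ∈ X i ∧ y ∈ Y i
  V := V

theorem prodLTS_R {ι : Type} (V : P → Set S) (I : Finset ι) (f : I → A)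
    (hf : Function.Injective f) (X Y : ι → Set S) (i : I) (x y : S) :
    (prodLTS V I f X Y).R (f i) x y ↔ x ∈ X i ∧ y ∈ Y i := by
  constructor
  · rintro ⟨k, hk, h⟩
    obtain rfl := hf hk
    exact h
  · exact fun h => ⟨i, rfl, h⟩

/-- If a nonempty plan is strongly executable on a nonempty set `Z` of states, its first action
is some `f i` with `Z ⊆ X i`, and the rest of the plan is strongly executable on `Y i`.
Since `f i` leads from any state of `Z` to all of `Y i`, running the rest from `Y i` reaches no state
that the whole plan misses. -/
theorem prodLTS_cons {ι : Type} (V : P → Set S) (I : Finset ι) (f : I → A)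
    (hf : Function.Injective f) (X Y : ι → Set S) (a : A) (π : List A) (Z : Set S)
    (hZ : Z.Nonempty) (hSE : ∀ z ∈ Z, SE (prodLTS V I f X Y) (a :: π) z) :
    ∃ i : I, Z ⊆ X i ∧ (Y i).Nonempty ∧ (∀ y ∈ Y i, SE (prodLTS V I f X Y) π y) ∧
      planImage (prodLTS V I f X Y) π (Y i) ⊆ planImage (prodLTS V I f X Y) (a :: π) Z := by
  obtain ⟨z, hz⟩ := hZ
  obtain ⟨⟨y, i, rfl, hx, hy⟩, hstep⟩ := hSE z hz
  refine ⟨i, ?_, ⟨y, hy⟩, fun y' hy' => hstep y' ⟨i, rfl, hx, hy'⟩, ?_⟩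
  · intro z' hz'
    obtain ⟨⟨y', h'⟩, -⟩ := hSE z' hz'
    exact ((prodLTS_R V I f hf X Y i z' y').1 h').1
  · rintro t ⟨y', hy', hr⟩
    exact ⟨z, hz, y', ⟨i, rfl, hx, hy'⟩, hr⟩

/-- A plan strongly executable on the nonempty set `Y i` follows a path of inclusions
`Y u ⊆ X v` from `i` to some `t`, and can end in every state of `Y t`. As no pair in `D` satisfies
such an inclusion, the path lies in the complement of `D`, whence `CBar I D i t`. -/
theorem exists_chain {ι : Type} (V : P → Set S) (I : Finset ι) (f : I → A)
    (hf : Function.Injective f) (X Y : ι → Set S) (D : Finset (ι × ι))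
    (hD : ∀ ts ∈ D, ¬ Y ts.1 ⊆ X ts.2) (π : List A) (i : I) (hi : (Y i).Nonempty)
    (hSE : ∀ y ∈ Y i, SE (prodLTS V I f X Y) π y) :
    ∃ t, CBar I D i t ∧ Y t ⊆ planImage (prodLTS V I f X Y) π (Y i) := by
  induction π generalizing i with
  | nil => exact ⟨i, ⟨i.2, i.2, .refl⟩, fun y hy => ⟨y, hy, rfl⟩⟩
  | cons a π ih =>
    obtain ⟨k, hik, hk, hSEk, him⟩ := prodLTS_cons V I f hf X Y a π (Y i) hi hSE
    obtain ⟨t, ⟨-, ht, hkt⟩, hsub⟩ := ih k hk hSEk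
    exact ⟨t, ⟨i.2, ht, .head ⟨i.2, k.2, fun h => hD _ h hik⟩ hkt⟩, hsub.trans him⟩

end

/-- φ = (⋀_{i∈I} Kh(ψ_i,χ_i)) ∧ (⋀_{j∈J} ¬Kh(ψ_j,χ_j)) is satisfiable
iff θ = θ⁺ ∧ θ⁻ ∧ (⋁_{D⊆I×I} θ_D) is satisfiable, where
θ_D = (⋀_{j∈J} ⋀_{(s,t)∈C(D̄)} (E(ψ_j∧¬ψ_s) ∨ E(χ_t∧¬χ_j))) ∧ (⋀_{(t,s)∈D} E(χ_t∧¬ψ_s)). -/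
theorem sat_combination
    (P A ι : Type) [Countable P] [Countable A] [Infinite A] [DecidableEq ι]
    (p : P) (I J : Finset ι) (hIJ : Disjoint I J)
    (ψ χ : ι → KhForm P)
    (hψ : ∀ k ∈ I ∪ J, KhFree (ψ k)) (hχ : ∀ k ∈ I ∪ J, KhFree (χ k)) :
    (∃ (S : Type) (_ : Nonempty S) (M : LTS P A S) (s : S),
        (∀ i ∈ I, s ∈ truth M (KhForm.kh (ψ i) (χ i))) ∧
        (∀ j ∈ J, s ∈ truth M (KhForm.neg (.kh (ψ j) (χ j))))) ↔
    (∃ (S : Type) (_ : Nonempty S) (M : LTS P A S) (s : S),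
        (∀ i ∈ I, s ∈ truth M (KhForm.or (Aform p (.neg (ψ i))) (Eform p (χ i)))) ∧
        (∀ j ∈ J, s ∈ truth M (Eform p (KhForm.and (ψ j) (.neg (χ j))))) ∧
        (∃ D : Finset (ι × ι), D ⊆ I ×ˢ I ∧
          (∀ j ∈ J, ∀ st : ι × ι, CBar I D st.1 st.2 →
            s ∈ truth M (KhForm.or
              (Eform p (KhForm.and (ψ j) (.neg (ψ st.1))))
              (Eform p (KhForm.and (χ st.2) (.neg (χ j)))))) ∧
          (∀ ts ∈ D, s ∈ truth M (Eform p (KhForm.and (χ ts.1) (.neg (ψ ts.2))))))) := by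
  classical
  simp only [mem_truth_or, mem_truth_Aform, mem_truth_Eform, mem_truth_and, mem_truth_neg,
    mem_truth_kh]
  constructor
  · rintro ⟨S, hS, M, s, hI, hJ⟩
    refine ⟨S, hS, M, s, fun i hi => ?_, fun j hj => ?_,
      (I ×ˢ I).filter fun ts => ¬ truth M (χ ts.1) ⊆ truth M (ψ ts.2),
      Finset.filter_subset _ _, fun j hj st hst => ?_, fun ts hts => ?_⟩
    · obtain ⟨π, h1, h2⟩ := hI i hi
      by_contra! h
      obtain ⟨⟨x, hx⟩, h⟩ := h
      obtain ⟨t, ht⟩ := SE.exists_run M π x (h1 x hx)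
      exact h t (h2 ⟨x, hx, ht⟩)
    · by_contra! h
      -- If `⟦ψ_j⟧ ⊆ ⟦χ_j⟧`, the empty plan would witness `Kh(ψ_j, χ_j)`.
      exact hJ j hj ⟨[], fun _ _ => trivial, by rintro _ ⟨x, hx, rfl⟩; exact h x hx⟩
    · obtain ⟨π, h1, h2⟩ := isWitness_of_chain M I _ ψ χ hI
        (fun u hu v hv huv => by simpa [hu, hv] using huv) hst
      by_contra! h
      exact hJ j hj ⟨π, fun x hx => h1 x (h.1 x hx),
        fun y ⟨x, hx, hr⟩ => h.2 y (h2 ⟨x, h.1 x hx, hr⟩)⟩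
    · exact Set.not_subset.1 (Finset.mem_filter.1 hts).2
  · rintro ⟨S, hS, M, s, hI, hJ, D, -, hC, hD⟩
    let f : I → A := fun i => Infinite.natEmbedding A (I.equivFin i)
    have hf : Function.Injective f := fun i k h =>
      I.equivFin.injective (Fin.ext ((Infinite.natEmbedding A).injective h))
    let N : LTS P A S :=
      prodLTS M.V I f (fun i => truth M (ψ i)) (fun i => truth M (χ i))
    have eψ : ∀ k ∈ I ∪ J, truth N (ψ k) = truth M (ψ k) := fun k hk =>
      truth_congr N M rfl _ (hψ k hk)
    have eχ : ∀ k ∈ I ∪ J, truth N (χ k) = truth M (χ k) := fun k hk =>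
      truth_congr N M rfl _ (hχ k hk)
    have hD' : ∀ ts ∈ D, ¬ truth M (χ ts.1) ⊆ truth M (ψ ts.2) := fun ts hts =>
      Set.not_subset.2 (hD ts hts)
    refine ⟨S, hS, N, s, fun i hi => ⟨[f ⟨i, hi⟩], ?_⟩, fun j hj => ?_⟩
    · have hR := prodLTS_R M.V I f hf (fun i => truth M (ψ i)) (fun i => truth M (χ i)) ⟨i, hi⟩
      have hk : i ∈ I ∪ J := Finset.mem_union_left _ hi
      unfold IsWitness
      rw [eψ i hk, eχ i hk]
      constructor
      · intro x hx
        obtain ⟨y, hy⟩ := (hI i hi).resolve_left fun h => h x hx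
        exact ⟨⟨y, (hR x y).2 ⟨hx, hy⟩⟩, fun _ _ => trivial⟩
      · rintro _ ⟨x, -, y, hxy, rfl⟩
        exact ((hR x y).1 hxy).2
    · rintro ⟨π, h1, h2⟩
      have hk : j ∈ I ∪ J := Finset.mem_union_right _ hj
      rw [eψ j hk] at h1 h2
      rw [eχ j hk] at h2
      obtain ⟨x, hx, hx'⟩ := hJ j hj
      cases π with
      | nil => exact hx' (h2 ⟨x, hx, rfl⟩)
      | cons a π =>
        obtain ⟨i, hji, hne, hSE, him⟩ := prodLTS_cons M.V I f hf _ _ a π _ ⟨x, hx⟩ h1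
        obtain ⟨t, hit, ht⟩ := exists_chain M.V I f hf (fun i => truth M (ψ i))
          (fun i => truth M (χ i)) D hD' π i hne hSE
        rcases hC j hj (i, t) hit with ⟨y, hy, hy'⟩ | ⟨y, hy, hy'⟩
        · exact hy' (hji hy)
        · exact hy' (h2 (him (ht hy)))
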